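/- The reductions →βch (checkers β), →τ (silent β), and →⊛ (interaction β) of the checkers calculus are each confluent. -/

import Mathlib

set_option autoImplicit false

/-! ### Players -/

inductive Player : Type
  | white
  | black
deriving DecidableEq

/-- The opposite player. -/
def Player.op : Player → Player
  | .white => .black
  | .black => .white

/-- `gamma p q` is `0` if the players agree (silent) and `1` otherwise (interaction). -/
def Player.gamma (p q : Player) : ℕ := if p = q then 0 else 1

/-! ### Ordinary λ-terms (de Bruijn representation) -/

inductive Lam : Type
  | var : ℕ → Lam
  | lam : Lam → Lam
  | app : Lam → Lam → Lam
deriving DecidableEq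

namespace Lam

/-- Shift the free de Bruijn indices ≥ `d` by one. -/
def liftAt : Lam → ℕ → Lam
  | .var n, d => .var (if n < d then n else n + 1)
  | .lam t, d => .lam (t.liftAt (d + 1))
  | .app t u, d => .app (t.liftAt d) (u.liftAt d)

/-- Capture-avoiding substitution of `u` for the de Bruijn index `x`. -/
def subst : Lam → ℕ → Lam → Lam
  | .var n, x, u => if n = x then u else if x < n then .var (n - 1) else .var n
  | .lam t, x, u => .lam (t.subst (x + 1) (u.liftAt 0))
  | .app t s, x, u => .app (t.subst x u) (s.subst x u)

end Lam

/-- Root β-rule: `(λx.t) u ↦ t[x:=u]`. -/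
inductive LBetaRoot : Lam → Lam → Prop
  | beta (t u : Lam) : LBetaRoot (.app (.lam t) u) (t.subst 0 u)

/-- Root η-rule: `λx. t x ↦ t` with `x ∉ FV(t)` (enforced by the lifting). -/
inductive LEtaRoot : Lam → Lam → Prop
  | eta (t : Lam) : LEtaRoot (.lam (.app (t.liftAt 0) (.var 0))) t

/-- Closure of a root relation under all contexts. -/
inductive LFull (R : Lam → Lam → Prop) : Lam → Lam → Prop
  | root {t u : Lam} : R t u → LFull R t u
  | lam {t u : Lam} : LFull R t u → LFull R (.lam t) (.lam u)
  | appL {t t' : Lam} (u : Lam) : LFull R t t' → LFull R (.app t u) (.app t' u)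
  | appR (t : Lam) {u u' : Lam} : LFull R u u' → LFull R (.app t u) (.app t u')

/-- Closure under applicative spine contexts `⟨·⟩ t1 … tk`. -/
inductive LSpine (R : Lam → Lam → Prop) : Lam → Lam → Prop
  | root {t u : Lam} : R t u → LSpine R t u
  | appL {t t' : Lam} (u : Lam) : LSpine R t t' → LSpine R (.app t u) (.app t' u)

/-- Closure under head contexts `λx1…xn.⟨·⟩ t1 … tk`. -/
inductive LHead (R : Lam → Lam → Prop) : Lam → Lam → Prop
  | spine {t u : Lam} : LSpine R t u → LHead R t u
  | lam {t u : Lam} : LHead R t u → LHead R (.lam t) (.lam u)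

/-- β-reduction. -/
def LBeta : Lam → Lam → Prop := LFull LBetaRoot
/-- η-reduction. -/
def LEta : Lam → Lam → Prop := LFull LEtaRoot
/-- Head reduction. -/
def LHStep : Lam → Lam → Prop := LHead LBetaRoot
/-- Multistep head reduction. -/
def LHSteps : Lam → Lam → Prop := Relation.ReflTransGen LHStep

/-- β-conversion (reflexive-symmetric-transitive closure of β-reduction). -/
def LBetaConv : Lam → Lam → Prop :=
  Relation.ReflTransGen (fun a b => LBeta a b ∨ LBeta b a)
/-- η-conversion. -/
def LEtaConv : Lam → Lam → Prop :=
  Relation.ReflTransGen (fun a b => LEta a b ∨ LEta b a)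

/-- Head normal forms: no head step out of `t`. -/
def Lam.LHNF (t : Lam) : Prop := ∀ u, ¬ LHStep t u

/-- Head convergence: `t ⇓h`. -/
def Lam.HConv (t : Lam) : Prop := ∃ h, LHSteps t h ∧ h.LHNF

/-- Ordinary contexts (one hole). -/
inductive LCtx : Type
  | hole : LCtx
  | lam : LCtx → LCtx
  | appL : LCtx → Lam → LCtx
  | appR : Lam → LCtx → LCtx

/-- Plugging (allowing variable capture). -/
def LCtx.fill : LCtx → Lam → Lam
  | .hole, t => t
  | .lam C, t => .lam (C.fill t)
  | .appL C u, t => .app (C.fill t) u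
  | .appR s C, t => .app s (C.fill t)

/-- Head contextual preorder on λ-terms. -/
def CtxLe (t u : Lam) : Prop := ∀ C : LCtx, (C.fill t).HConv → (C.fill u).HConv

/-! ### Checkers terms -/

inductive CTerm : Type
  | var : ℕ → CTerm
  | lam : Player → CTerm → CTerm
  | app : Player → CTerm → CTerm → CTerm
deriving DecidableEq

namespace CTerm

/-- Shift the free de Bruijn indices ≥ `d` by one. -/
def liftAt : CTerm → ℕ → CTerm
  | .var n, d => .var (if n < d then n else n + 1)
  | .lam p t, d => .lam p (t.liftAt (d + 1))
  | .app p t u, d => .app p (t.liftAt d) (u.liftAt d)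

/-- Capture-avoiding substitution of `u` for the de Bruijn index `x`. -/
def subst : CTerm → ℕ → CTerm → CTerm
  | .var n, x, u => if n = x then u else if x < n then .var (n - 1) else .var n
  | .lam p t, x, u => .lam p (t.subst (x + 1) (u.liftAt 0))
  | .app p t s, x, u => .app p (t.subst x u) (s.subst x u)

/-- The underlying ordinary λ-term of a checkers term. -/
def untag : CTerm → Lam
  | .var n => .var n
  | .lam _ t => .lam t.untag
  | .app _ t u => .app t.untag u.untag

end CTerm

/-- Player lifting: tag every abstraction and application with player `p`. -/
def Lam.tag : Lam → Player → CTerm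
  | .var n, _ => .var n
  | .lam t, p => .lam p (t.tag p)
  | .app t u, p => .app p (t.tag p) (u.tag p)

/-- Silent β root rule: the abstraction and the application carry the same player. -/
inductive SilentRoot : CTerm → CTerm → Prop
  | beta (p : Player) (t u : CTerm) : SilentRoot (.app p (.lam p t) u) (t.subst 0 u)

/-- Interaction β root rule: the application carries the opposite player of the abstraction. -/
inductive InterRoot : CTerm → CTerm → Prop
  | beta (p : Player) (t u : CTerm) : InterRoot (.app p.op (.lam p t) u) (t.subst 0 u)

/-- Closure of a root relation under all checkers contexts. -/
inductive CFull (R : CTerm → CTerm → Prop) : CTerm → CTerm → Prop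
  | root {t u : CTerm} : R t u → CFull R t u
  | lam (p : Player) {t u : CTerm} : CFull R t u → CFull R (.lam p t) (.lam p u)
  | appL (p : Player) {t t' : CTerm} (u : CTerm) : CFull R t t' → CFull R (.app p t u) (.app p t' u)
  | appR (p : Player) (t : CTerm) {u u' : CTerm} : CFull R u u' → CFull R (.app p t u) (.app p t u')

/-- Closure under applicative spine contexts `⟨·⟩ @_{q1} t1 … @_{qk} tk`. -/
inductive CSpine (R : CTerm → CTerm → Prop) : CTerm → CTerm → Prop
  | root {t u : CTerm} : R t u → CSpine R t u
  | appL (p : Player) {t t' : CTerm} (u : CTerm) : CSpine R t t' → CSpine R (.app p t u) (.app p t' u)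

/-- Closure under checkers head contexts `λ_{p1}x1…λ_{pn}xn.⟨·⟩ @_{q1} t1 … @_{qk} tk`. -/
inductive CHead (R : CTerm → CTerm → Prop) : CTerm → CTerm → Prop
  | spine {t u : CTerm} : CSpine R t u → CHead R t u
  | lam (p : Player) {t u : CTerm} : CHead R t u → CHead R (.lam p t) (.lam p u)

/-- Silent β-reduction `→τ`. -/
def StepTau : CTerm → CTerm → Prop := CFull SilentRoot
/-- Interaction β-reduction `→⊛`. -/
def StepInt : CTerm → CTerm → Prop := CFull InterRoot
/-- Checkers β-reduction `→βch`. -/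
def StepBch (t u : CTerm) : Prop := StepTau t u ∨ StepInt t u

/-- Silent head reduction `→hτ`. -/
def HStepTau : CTerm → CTerm → Prop := CHead SilentRoot
/-- Interaction head reduction `→h⊛`. -/
def HStepInt : CTerm → CTerm → Prop := CHead InterRoot
/-- Checkers head reduction `→hch`. -/
def HStepCh (t u : CTerm) : Prop := HStepTau t u ∨ HStepInt t u

/-- Checkers head normal form. -/
def CTerm.HNF (t : CTerm) : Prop := ∀ u, ¬ HStepCh t u

/-- `BigStep t k` means `t ⇓^k`: the (deterministic) checkers head evaluation of `t`
terminates and performs exactly `k` interaction steps. -/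
inductive BigStep : CTerm → ℕ → Prop
  | nf {t : CTerm} : t.HNF → BigStep t 0
  | silent {t u : CTerm} {k : ℕ} : HStepTau t u → BigStep u k → BigStep t k
  | inter {t u : CTerm} {k : ℕ} : HStepInt t u → BigStep u k → BigStep t (k + 1)

/-- `HRed t n i u`: a checkers head reduction sequence from `t` to `u` of length `n`
containing exactly `i` interaction steps. -/
inductive HRed : CTerm → ℕ → ℕ → CTerm → Prop
  | refl (t : CTerm) : HRed t 0 0 t
  | silent {t u s : CTerm} {n i : ℕ} : HStepTau t u → HRed u n i s → HRed t (n + 1) i s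
  | inter {t u s : CTerm} {n i : ℕ} : HStepInt t u → HRed u n i s → HRed t (n + 1) (i + 1) s

/-- Checkers contexts (one hole). -/
inductive CCtx : Type
  | hole : CCtx
  | lam : Player → CCtx → CCtx
  | appL : Player → CCtx → CTerm → CCtx
  | appR : Player → CTerm → CCtx → CCtx

/-- Plugging (allowing variable capture). -/
def CCtx.fill : CCtx → CTerm → CTerm
  | .hole, t => t
  | .lam p C, t => .lam p (C.fill t)
  | .appL p C u, t => .app p (C.fill t) u
  | .appR p s C, t => .app p s (C.fill t)

/-- Player lifting of ordinary contexts. -/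
def LCtx.tag : LCtx → Player → CCtx
  | .hole, _ => .hole
  | .lam C, p => .lam p (C.tag p)
  | .appL C u, p => .appL p (C.tag p) (u.tag p)
  | .appR s C, p => .appR p (s.tag p) (C.tag p)

/-- Checkers interaction preorder `≼ctx⊛` on checkers terms. -/
def IntCtxLe (t u : CTerm) : Prop :=
  ∀ (C : CCtx) (k : ℕ), BigStep (C.fill t) k → BigStep (C.fill u) k

/-- Checkers interaction improvement `≼imp⊛` on checkers terms. -/
def ImpCtxLe (t u : CTerm) : Prop :=
  ∀ (C : CCtx) (k : ℕ), BigStep (C.fill t) k → ∃ k', k' ≤ k ∧ BigStep (C.fill u) k'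

/-- Interaction preorder `⊑int` on ordinary λ-terms, via black lifting. -/
def IntLe (t u : Lam) : Prop := IntCtxLe (t.tag .black) (u.tag .black)

/-- Interaction improvement `⊑int·imp` on ordinary λ-terms, via black lifting. -/
def ImpLe (t u : Lam) : Prop := ImpCtxLe (t.tag .black) (u.tag .black)

/-- Interaction equivalence `≡int`. -/
def IntEq (t u : Lam) : Prop := IntLe t u ∧ IntLe u t

/-- Silent conversion `=τ`: reflexive-symmetric-transitive closure of `→τ`. -/
def SilentConv : CTerm → CTerm → Prop :=
  Relation.ReflTransGen (fun a b => StepTau a b ∨ StepTau b a)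


/-- A relation is confluent. -/
def Confluent (R : CTerm → CTerm → Prop) : Prop :=
  ∀ t u₁ u₂, Relation.ReflTransGen R t u₁ → Relation.ReflTransGen R t u₂ →
    ∃ s, Relation.ReflTransGen R u₁ s ∧ Relation.ReflTransGen R u₂ s

namespace CTerm

theorem lift_lift (t : CTerm) : ∀ k d, k ≤ d →
    (t.liftAt k).liftAt (d + 1) = (t.liftAt d).liftAt k := by
  induction t with
  | var n => intro k d h; simp only [liftAt, CTerm.var.injEq]; split_ifs <;> omega
  | lam p t ih => intro k d h; simp only [liftAt]; rw [ih _ _ (by omega)]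
  | app p t u iht ihu => intro k d h; simp only [liftAt]; rw [iht _ _ h, ihu _ _ h]

theorem subst_lift (t : CTerm) : ∀ x u, (t.liftAt x).subst x u = t := by
  induction t with
  | var n => 
    intro x u; simp only [liftAt, subst]
    split_ifs <;> first | omega | rfl
  | lam p t ih => intro x u; simp only [liftAt, subst]; rw [ih]
  | app p t u iht ihu => intro x u; simp only [liftAt, subst]; rw [iht, ihu]

theorem lift_subst_ge (t : CTerm) : ∀ x d u, x ≤ d →
    (t.subst x u).liftAt d = (t.liftAt (d + 1)).subst x (u.liftAt d) := by
  induction t with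
  | var n =>
    intro x d u h; simp only [liftAt, subst]
    split_ifs <;> first
      | omega
      | rfl
      | (simp only [liftAt, CTerm.var.injEq]; split_ifs <;> omega)
  | lam p t ih =>
    intro x d u h; simp only [liftAt, subst]
    rw [ih _ _ _ (by omega), lift_lift _ _ _ (Nat.zero_le _)]
  | app p t u iht ihu => intro x d v h; simp only [liftAt, subst]; rw [iht _ _ _ h, ihu _ _ _ h]

theorem lift_subst_le (t : CTerm) : ∀ x d u, d ≤ x →
    (t.subst x u).liftAt d = (t.liftAt d).subst (x + 1) (u.liftAt d) := by
  induction t with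
  | var n =>
    intro x d u h; simp only [liftAt, subst]
    split_ifs <;> first
      | omega
      | rfl
      | (simp only [liftAt, CTerm.var.injEq]; split_ifs <;> omega)
  | lam p t ih =>
    intro x d u h; simp only [liftAt, subst]
    rw [ih _ _ _ (by omega), lift_lift _ _ _ (Nat.zero_le _)]
  | app p t u iht ihu => intro x d v h; simp only [liftAt, subst]; rw [iht _ _ _ h, ihu _ _ _ h]

theorem subst_subst (t : CTerm) : ∀ x y u v, x ≤ y →
    (t.subst x u).subst y v = (t.subst (y + 1) (v.liftAt x)).subst x (u.subst y v) := by
  induction t with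
  | var n =>
    intro x y u v h
    rcases lt_trichotomy n x with hn | hn | hn
    · simp only [subst]
      rw [if_neg (by omega), if_neg (by omega), if_neg (by omega), if_neg (by omega)]
      simp only [subst]
      rw [if_neg (by omega), if_neg (by omega), if_neg (by omega), if_neg (by omega)]
    · subst hn
      simp only [subst]
      rw [if_pos trivial, if_neg (by omega), if_neg (by omega)]
      simp [subst]
    · rcases lt_trichotomy n (y + 1) with hy | hy | hy
      · simp only [subst]
        rw [if_neg (by omega), if_pos (by omega), if_neg (by omega), if_neg (by omega)]
        simp only [subst]
        rw [if_neg (by omega), if_neg (by omega), if_neg (by omega), if_pos (by omega)]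
      · simp only [subst]
        rw [if_neg (by omega), if_pos (by omega), if_pos hy, subst_lift]
        simp only [subst]
        rw [if_pos (by omega)]
      · simp only [subst]
        rw [if_neg (by omega), if_pos (by omega), if_neg (by omega), if_pos (by omega)]
        simp only [subst]
        rw [if_neg (by omega), if_pos (by omega), if_neg (by omega), if_pos (by omega)]
  | lam p t ih =>
    intro x y u v h; simp only [subst]
    rw [ih _ _ _ _ (by omega), lift_lift _ _ _ (Nat.zero_le _),
      lift_subst_le _ _ _ _ (Nat.zero_le _)]
  | app p t u iht ihu =>
    intro x y u v h; simp only [subst]; rw [iht _ _ _ _ h, ihu _ _ _ _ h]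

end CTerm

/-- Generic root β-rule; `A p q` says that an application of `p` may fire an abstraction of `q`. -/
inductive GRoot (A : Player → Player → Prop) : CTerm → CTerm → Prop
  | beta {p q : Player} (t u : CTerm) : A p q → GRoot A (.app p (.lam q t) u) (t.subst 0 u)

/-- Parallel reduction. -/
inductive Par (A : Player → Player → Prop) : CTerm → CTerm → Prop
  | var (n : ℕ) : Par A (.var n) (.var n)
  | lam (p : Player) {t t' : CTerm} : Par A t t' → Par A (.lam p t) (.lam p t')
  | app (p : Player) {t t' u u' : CTerm} : Par A t t' → Par A u u' →
      Par A (.app p t u) (.app p t' u')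
  | beta {p q : Player} {t t' u u' : CTerm} : A p q → Par A t t' → Par A u u' →
      Par A (.app p (.lam q t) u) (t'.subst 0 u')

section
variable {A : Player → Player → Prop}

theorem Par.refl (t : CTerm) : Par A t t := by
  induction t with
  | var n => exact .var n
  | lam p t ih => exact .lam p ih
  | app p t u iht ihu => exact .app p iht ihu

theorem Par.lift {t t' : CTerm} (h : Par A t t') : ∀ d, Par A (t.liftAt d) (t'.liftAt d) := by
  induction h with
  | var n => intro d; exact Par.refl _
  | lam p _ ih => intro d; exact .lam p (ih _)
  | app p _ _ iht ihu => intro d; exact .app p (iht _) (ihu _)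
  | beta hA _ _ iht ihu =>
    intro d
    rw [CTerm.lift_subst_ge _ _ _ _ (Nat.zero_le _)]
    exact .beta hA (iht _) (ihu _)

theorem Par.subst {t t' : CTerm} (h : Par A t t') : ∀ x {u u' : CTerm}, Par A u u' →
    Par A (t.subst x u) (t'.subst x u') := by
  induction h with
  | var n =>
    intro x u u' hu
    simp only [CTerm.subst]
    split_ifs
    · exact hu
    · exact .var _
    · exact .var _
  | lam p _ ih => intro x u u' hu; exact .lam p (ih _ (hu.lift 0))
  | app p _ _ iht ihu => intro x u u' hu; exact .app p (iht _ hu) (ihu _ hu)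
  | beta hA _ _ iht ihu =>
    intro x u u' hu
    rw [CTerm.subst_subst _ _ _ _ _ (Nat.zero_le _)]
    exact .beta hA (iht _ (hu.lift 0)) (ihu _ hu)

theorem Par.diamond {t u₁ : CTerm} (h₁ : Par A t u₁) : ∀ {u₂ : CTerm}, Par A t u₂ →
    ∃ s, Par A u₁ s ∧ Par A u₂ s := by
  induction h₁ with
  | var n => intro u₂ h₂; cases h₂; exact ⟨_, .var n, .var n⟩
  | lam p _ ih =>
    intro u₂ h₂
    cases h₂ with
    | lam _ h =>
      obtain ⟨s, h1, h2⟩ := ih h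
      exact ⟨_, .lam p h1, .lam p h2⟩
  | app p ht hu iht ihu =>
    intro u₂ h₂
    cases h₂ with
    | app _ ht' hu' =>
      obtain ⟨s, h1, h2⟩ := iht ht'
      obtain ⟨r, h3, h4⟩ := ihu hu'
      exact ⟨_, .app p h1 h3, .app p h2 h4⟩
    | beta hA ht' hu' =>
      obtain ⟨s, h1, h2⟩ := iht (.lam _ ht')
      obtain ⟨r, h3, h4⟩ := ihu hu'
      cases ht with
      | lam _ ht =>
        cases h1 with
        | lam _ h1 =>
          cases h2 with
          | lam _ h2 => exact ⟨_, .beta hA h1 h3, h2.subst 0 h4⟩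
  | beta hA ht hu iht ihu =>
    intro u₂ h₂
    cases h₂ with
    | app _ ht' hu' =>
      obtain ⟨r, h3, h4⟩ := ihu hu'
      cases ht' with
      | lam _ ht' =>
        obtain ⟨s, h1, h2⟩ := iht ht'
        exact ⟨_, h1.subst 0 h3, .beta hA h2 h4⟩
    | beta _ ht' hu' =>
      obtain ⟨s, h1, h2⟩ := iht ht'
      obtain ⟨r, h3, h4⟩ := ihu hu'
      exact ⟨_, h1.subst 0 h3, h2.subst 0 h4⟩

theorem Par.of_step {t u : CTerm} (h : CFull (GRoot A) t u) : Par A t u := by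
  induction h with
  | root h => cases h with | beta t u hA => exact .beta hA (.refl _) (.refl _)
  | lam p _ ih => exact .lam p ih
  | appL p u _ ih => exact .app p ih (.refl _)
  | appR p t _ ih => exact .app p (.refl _) ih

theorem Par.steps {t u : CTerm} (h : Par A t u) : Relation.ReflTransGen (CFull (GRoot A)) t u := by
  induction h with
  | var n => exact .refl
  | lam p _ ih => exact ih.lift (CTerm.lam p) (fun _ _ h => .lam p h)
  | @app p t t' u u' _ _ iht ihu =>
    exact (iht.lift (fun s => CTerm.app p s u) (fun _ _ h => .appL p _ h)).trans
      (ihu.lift (fun s => CTerm.app p t' s) (fun _ _ h => .appR p _ h))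
  | @beta p q t t' u u' hA _ _ iht ihu =>
    have h1 := iht.lift (fun s => CTerm.app p (.lam q s) u)
      (fun _ _ h => CFull.appL (R := GRoot A) p _ (.lam q h))
    have h2 := ihu.lift (fun s => CTerm.app p (.lam q t') s)
      (fun _ _ h => CFull.appR (R := GRoot A) p _ h)
    exact (h1.trans h2).tail (.root (.beta _ _ hA))

theorem confluent_gen (A : Player → Player → Prop) : Confluent (CFull (GRoot A)) := by
  have key : ∀ t u, Relation.ReflTransGen (Par A) t u →
      Relation.ReflTransGen (CFull (GRoot A)) t u := by
    intro t u h
    induction h with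
    | refl => exact .refl
    | tail _ h ih => exact ih.trans h.steps
  intro t u₁ u₂ h₁ h₂
  obtain ⟨s, a, b⟩ := Relation.church_rosser (r := Par A) (fun a b c hab hac => by
      obtain ⟨s, h1, h2⟩ := hab.diamond hac
      exact ⟨s, .single h1, .single h2⟩)
    (h₁.lift id fun _ _ h => Par.of_step h) (h₂.lift id fun _ _ h => Par.of_step h)
  exact ⟨s, key _ _ a, key _ _ b⟩

end

theorem CFull.mono' {R S : CTerm → CTerm → Prop} (hRS : ∀ t u, R t u → S t u) {t u : CTerm}
    (h : CFull R t u) : CFull S t u := by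
  induction h with
  | root h => exact .root (hRS _ _ h)
  | lam p _ ih => exact .lam p ih
  | appL p u _ ih => exact .appL p u ih
  | appR p t _ ih => exact .appR p t ih

theorem confluent_congr {R S : CTerm → CTerm → Prop} (h : ∀ t u, R t u ↔ S t u)
    (hS : Confluent S) : Confluent R := by
  have : R = S := by funext t u; exact propext (h t u)
  rw [this]; exact hS

theorem stepTau_iff (t u : CTerm) : StepTau t u ↔ CFull (GRoot (fun p q => p = q)) t u := by
  constructor
  · exact CFull.mono' (fun _ _ h => by cases h; exact .beta _ _ rfl)
  · exact CFull.mono' (fun _ _ h => by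
      cases h with | beta t u hA => subst hA; exact .beta _ _ _)

theorem stepInt_iff (t u : CTerm) : StepInt t u ↔ CFull (GRoot (fun p q => p = q.op)) t u := by
  constructor
  · exact CFull.mono' (fun _ _ h => by cases h; exact .beta _ _ rfl)
  · exact CFull.mono' (fun _ _ h => by
      cases h with | beta t u hA => subst hA; exact .beta _ _ _)

theorem stepBch_iff (t u : CTerm) : StepBch t u ↔ CFull (GRoot (fun _ _ => True)) t u := by
  constructor
  · rintro (h | h)
    · exact CFull.mono' (fun _ _ h => by cases h; exact .beta _ _ trivial) h
    · exact CFull.mono' (fun _ _ h => by cases h; exact .beta _ _ trivial) h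
  · intro h
    induction h with
    | root h =>
      cases h with
      | @beta p q t u _ =>
        cases p <;> cases q
        · exact .inl (.root (.beta _ _ _))
        · exact .inr (.root (.beta .black _ _))
        · exact .inr (.root (.beta .white _ _))
        · exact .inl (.root (.beta _ _ _))
    | lam p _ ih => exact ih.imp (.lam p) (.lam p)
    | appL p u _ ih => exact ih.imp (.appL p u) (.appL p u)
    | appR p t _ ih => exact ih.imp (.appR p t) (.appR p t)

/-- The reductions `→βch`, `→τ` and `→⊛` of the checkers calculus are each confluent. -/
theorem checkers_reductions_confluent :
    Confluent StepBch ∧ Confluent StepTau ∧ Confluent StepInt := by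
  exact ⟨confluent_congr stepBch_iff (confluent_gen _), confluent_congr stepTau_iff (confluent_gen _),
    confluent_congr stepInt_iff (confluent_gen _)⟩
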